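/- For n ≥ 1 and k ≥ 0, the number of Tamari intervals (T, T') of size n such that the canopy-vectors of T and T' agree in exactly k+2 positions equals (2/(n(n+1))) · C(3n, k) · C(n+1, k+2). -/

import Mathlib

/-- Binary trees: a leaf or a binary node with two subtrees. -/
inductive BT : Type
  | leaf : BT
  | node : BT → BT → BT

namespace BT

/-- Number of binary (internal) nodes. -/
def size : BT → ℕ
  | leaf => 0
  | node l r => l.size + r.size + 1

/-- One right rotation somewhere in the tree: ((A,B),C) ↦ (A,(B,C)). -/
inductive Rot : BT → BT → Prop
  | rotate (A B C : BT) : Rot (node (node A B) C) (node A (node B C))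
  | left {l l' : BT} (r : BT) : Rot l l' → Rot (node l r) (node l' r)
  | right (l : BT) {r r' : BT} : Rot r r' → Rot (node l r) (node l r')

/-- Tamari order: reflexive-transitive closure of right rotation. -/
def tle (T T' : BT) : Prop := Relation.ReflTransGen Rot T T'

/-- Bracket-vector: sizes of right subtrees of nodes, in infix order. -/
def bracket : BT → List ℕ
  | leaf => []
  | node l r => bracket l ++ r.size :: bracket r

/-- Dual bracket-vector: sizes of left subtrees of nodes, in infix order. -/
def dualBracket : BT → List ℕ
  | leaf => []
  | node l r => dualBracket l ++ l.size :: dualBracket r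

/-- Canopy word: for each leaf (left to right), 1 if it is a left child, 0 if a right child;
the argument `b` is the value assigned to the tree if it is itself a leaf. -/
def canopyAux (b : ℕ) : BT → List ℕ
  | leaf => [b]
  | node l r => canopyAux 1 l ++ canopyAux 0 r

/-- Canopy-vector of a binary tree. -/
def canopy (T : BT) : List ℕ := canopyAux 1 T

/-- Left-right mirror. -/
def mir : BT → BT
  | leaf => leaf
  | node l r => node (mir r) (mir l)

/-- Tamari interval of size n. -/
def interval (p : BT × BT) (n : ℕ) : Prop :=
  p.1.size = n ∧ p.2.size = n ∧ tle p.1 p.2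

/-- Tamari interval (of unspecified size). -/
def isInt (p : BT × BT) : Prop := p.1.size = p.2.size ∧ tle p.1 p.2

/-- The rise operation (T,T') ↦ ((T,ε),(ε,T')). -/
def riseF (p : BT × BT) : BT × BT := (node p.1 leaf, node leaf p.2)

/-- An interval is modern when its rise is again an interval. -/
def modern (p : BT × BT) : Prop := tle (node p.1 leaf) (node leaf p.2)

/-- Infinitely modern: every iterated rise is an interval. -/
def infModern (p : BT × BT) : Prop :=
  ∀ k : ℕ, tle ((riseF^[k] p).1) ((riseF^[k] p).2)

/-- Synchronized: equal canopies. -/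
def synced (p : BT × BT) : Prop := canopy p.1 = canopy p.2

/-- Self-dual: equal to its dual (mir T', mir T). -/
def selfDual (p : BT × BT) : Prop := mir p.2 = p.1 ∧ mir p.1 = p.2

/-- Number of positions where the two canopies agree. -/
def agreeCount (p : BT × BT) : ℕ :=
  ((List.range (p.1.size + 1)).filter
    (fun i => (canopy p.1).getD i 0 == (canopy p.2).getD i 0)).length

/-- Number of canopy positions of joint type (a on top, b on bottom), for an interval (T,T')
with T' the upper tree. -/
def typeCount (a b : ℕ) (p : BT × BT) : ℕ :=
  ((List.range (p.1.size + 1)).filter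
    (fun i => ((canopy p.2).getD i 0 == a) && ((canopy p.1).getD i 0 == b))).length

end BT

section algpart

open Finset

/-- substitution of a series `V` for the catalytic variable. -/
noncomputable def evFun {R : Type*} [CommRing R] (V : PowerSeries R)
    (F : PowerSeries (Polynomial R)) : PowerSeries R :=
  PowerSeries.mk fun n => ∑ ij ∈ antidiagonal n,
    PowerSeries.coeff ij.2 (Polynomial.aeval V (PowerSeries.coeff ij.1 F))

section alg
variable {R : Type*} [CommRing R]

lemma sum_four (n : ℕ) (f : ℕ → ℕ → ℕ → ℕ → R) :
    ∑ ij ∈ antidiagonal n, ∑ ab ∈ antidiagonal ij.1, ∑ cd ∈ antidiagonal ij.2,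
      f ab.1 ab.2 cd.1 cd.2 =
    ∑ ij ∈ antidiagonal n, ∑ ab ∈ antidiagonal ij.1, ∑ cd ∈ antidiagonal ij.2,
      f ab.1 cd.1 ab.2 cd.2 := by
  simp_rw [← Finset.sum_product', Finset.sum_sigma']
  refine Finset.sum_bij'
    (fun z _ => ⟨(z.2.1.1 + z.2.2.1, z.2.1.2 + z.2.2.2),
      ((z.2.1.1, z.2.2.1), (z.2.1.2, z.2.2.2))⟩)
    (fun z _ => ⟨(z.2.1.1 + z.2.2.1, z.2.1.2 + z.2.2.2),
      ((z.2.1.1, z.2.2.1), (z.2.1.2, z.2.2.2))⟩) ?_ ?_ ?_ ?_ ?_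
  · rintro ⟨⟨i, j⟩, ⟨a, b⟩, c, d⟩ h
    simp only [mem_sigma, mem_product, HasAntidiagonal.mem_antidiagonal] at h ⊢
    obtain ⟨h1, h2, h3⟩ := h
    refine ⟨?_, ?_⟩
    · omega
    · simp
  · rintro ⟨⟨i, j⟩, ⟨a, b⟩, c, d⟩ h
    simp only [mem_sigma, mem_product, HasAntidiagonal.mem_antidiagonal] at h ⊢
    obtain ⟨h1, h2, h3⟩ := h
    refine ⟨?_, ?_⟩
    · omega
    · simp
  · rintro ⟨⟨i, j⟩, ⟨a, b⟩, c, d⟩ h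
    simp only [mem_sigma, mem_product, HasAntidiagonal.mem_antidiagonal] at h ⊢
    obtain ⟨h1, h2, h3⟩ := h
    subst h2 h3
    rfl
  · rintro ⟨⟨i, j⟩, ⟨a, b⟩, c, d⟩ h
    simp only [mem_sigma, mem_product, HasAntidiagonal.mem_antidiagonal] at h ⊢
    obtain ⟨h1, h2, h3⟩ := h
    subst h2 h3
    rfl
  · rintro ⟨⟨i, j⟩, ⟨a, b⟩, c, d⟩ h
    rfl

lemma evFun_mul (V : PowerSeries R) (F G : PowerSeries (Polynomial R)) :
    evFun V (F * G) = evFun V F * evFun V G := by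
  ext n
  have := sum_four n (fun a b c d => PowerSeries.coeff c (Polynomial.aeval V (PowerSeries.coeff a F))
    * PowerSeries.coeff d (Polynomial.aeval V (PowerSeries.coeff b G)))
  simp only [evFun, PowerSeries.coeff_mk, PowerSeries.coeff_mul, map_sum, map_mul]
  rw [this]
  refine sum_congr rfl fun ij _ => ?_
  rw [Finset.sum_mul_sum]

lemma evFun_C (V : PowerSeries R) (p : Polynomial R) :
    evFun V (PowerSeries.C p) = Polynomial.aeval V p := by
  ext n
  simp only [evFun, PowerSeries.coeff_mk, PowerSeries.coeff_C]
  rw [Finset.sum_eq_single (0, n)]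
  · simp
  · rintro ⟨a, b⟩ h hne
    have : a ≠ 0 := by
      rintro rfl
      simp at h
      simp [h] at hne
    simp [this]
  · simp

lemma evFun_X (V : PowerSeries R) :
    evFun V PowerSeries.X = PowerSeries.X := by
  ext n
  simp only [evFun, PowerSeries.coeff_mk, PowerSeries.coeff_X]
  rcases n with _ | n
  · simp
  rw [Finset.sum_eq_single (1, n)]
  · simp [PowerSeries.coeff_one]
  · rintro ⟨a, b⟩ h hne
    have : a ≠ 1 := by
      rintro rfl
      simp at h
      apply hne
      ext <;> simp; omega
    simp [this]
  · simp; omega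

lemma evFun_map (V : PowerSeries R) (F : PowerSeries R) :
    evFun V (PowerSeries.map Polynomial.C F) = F := by
  ext n
  simp only [evFun, PowerSeries.coeff_mk, PowerSeries.coeff_map, Polynomial.aeval_C]
  rw [Finset.sum_eq_single (n, 0)]
  · simp
  · rintro ⟨a, b⟩ h hne
    have : b ≠ 0 := by
      rintro rfl
      simp at h
      simp [h] at hne
    simp [PowerSeries.coeff_C, this]
  · simp

/-- substitution as a ring homomorphism. -/
noncomputable def ev (V : PowerSeries R) : PowerSeries (Polynomial R) →+* PowerSeries R where
  toFun := evFun V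
  map_one' := by simpa using evFun_C V 1
  map_mul' := evFun_mul V
  map_zero' := by simpa using evFun_C V 0
  map_add' F G := by
    ext n
    simp [evFun, Finset.sum_add_distrib]

lemma ev_C (V : PowerSeries R) (p : Polynomial R) :
    ev V (PowerSeries.C p) = Polynomial.aeval V p := evFun_C V p
lemma ev_X (V : PowerSeries R) : ev V PowerSeries.X = PowerSeries.X := evFun_X V
lemma ev_map (V : PowerSeries R) (F : PowerSeries R) :
    ev V (PowerSeries.map Polynomial.C F) = F := evFun_map V F

lemma ev_congr (V V' : PowerSeries R) (G : PowerSeries (Polynomial R)) (n : ℕ)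
    (h : PowerSeries.X ^ n ∣ V - V') : PowerSeries.X ^ n ∣ ev V G - ev V' G := by
  rw [PowerSeries.X_pow_dvd_iff]
  intro m hm
  simp only [ev, RingHom.coe_mk, MonoidHom.coe_mk, OneHom.coe_mk, evFun, map_sub,
    PowerSeries.coeff_mk]
  rw [← Finset.sum_sub_distrib]
  refine Finset.sum_eq_zero ?_
  rintro ⟨i, j⟩ hij
  simp only [HasAntidiagonal.mem_antidiagonal] at hij
  have h1 : V - V' ∣ Polynomial.aeval V (PowerSeries.coeff i G)
      - Polynomial.aeval V' (PowerSeries.coeff i G) := by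
    have := Polynomial.sub_dvd_eval_sub V V'
      ((PowerSeries.coeff i G).map (algebraMap R (PowerSeries R)))
    simpa [Polynomial.aeval_def, Polynomial.eval_map] using this
  have h2 := (PowerSeries.X_pow_dvd_iff.1 (h.trans h1)) j (by omega)
  simpa using h2

/-- iterates towards the fixed point. -/
noncomputable def fixSeq (G : PowerSeries (Polynomial R)) : ℕ → PowerSeries R
  | 0 => 0
  | n + 1 => PowerSeries.X * ev (fixSeq G n) G

lemma fixSeq_dvd (G : PowerSeries (Polynomial R)) (n : ℕ) :
    PowerSeries.X ^ n ∣ fixSeq G (n + 1) - fixSeq G n := by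
  induction n with
  | zero => simp
  | succ n ih =>
    rw [fixSeq, fixSeq, ← mul_sub, pow_succ']
    exact mul_dvd_mul_left _ (ev_congr _ _ G n ih)

lemma fixSeq_dvd' (G : PowerSeries (Polynomial R)) (n k : ℕ) :
    PowerSeries.X ^ n ∣ fixSeq G (n + k) - fixSeq G n := by
  induction k with
  | zero => simp
  | succ k ih =>
    have h := (pow_dvd_pow (PowerSeries.X (R := R)) (Nat.le_add_right n k)).trans
      (fixSeq_dvd G (n + k))
    have := dvd_add h ih
    simpa [← add_assoc] using this

lemma exists_fix (G : PowerSeries (Polynomial R)) :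
    ∃ V : PowerSeries R, V = PowerSeries.X * ev V G := by
  set V : PowerSeries R := PowerSeries.mk fun n => PowerSeries.coeff n (fixSeq G (n + 1)) with hV
  have key : ∀ n, PowerSeries.X ^ n ∣ V - fixSeq G n := by
    intro n
    rw [PowerSeries.X_pow_dvd_iff]
    intro m hm
    obtain ⟨k, rfl⟩ := Nat.exists_eq_add_of_lt hm
    have h := (PowerSeries.X_pow_dvd_iff.1 (fixSeq_dvd' G (m + 1) k)) m (by omega)
    rw [map_sub, sub_eq_zero] at h
    rw [map_sub, hV, PowerSeries.coeff_mk, ← h, sub_eq_zero]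
    congr 2
    omega
  refine ⟨V, ?_⟩
  ext n
  have h1 := (PowerSeries.X_pow_dvd_iff.1 (key (n + 1 + 1))) n (by omega)
  have h2 := (PowerSeries.X_pow_dvd_iff.1
    ((ev_congr _ _ G (n + 1) (key (n + 1))).mul_left PowerSeries.X)) n (by omega)
  rw [map_sub, sub_eq_zero] at h1
  rw [mul_sub, map_sub, sub_eq_zero] at h2
  rw [h1, h2, fixSeq]

/-- coefficientwise derivative in the catalytic variable. -/
noncomputable def dv (F : PowerSeries (Polynomial R)) : PowerSeries (Polynomial R) :=
  PowerSeries.mk fun n => Polynomial.derivative (PowerSeries.coeff n F)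

lemma dv_add (F G : PowerSeries (Polynomial R)) : dv (F + G) = dv F + dv G := by
  ext1 n; simp [dv]
lemma dv_sub (F G : PowerSeries (Polynomial R)) : dv (F - G) = dv F - dv G := by
  ext1 n; simp [dv]
lemma dv_mul (F G : PowerSeries (Polynomial R)) : dv (F * G) = dv F * G + F * dv G := by
  ext1 n
  simp [dv, PowerSeries.coeff_mul, Polynomial.derivative_mul, Finset.sum_add_distrib]
lemma dv_C (p : Polynomial R) : dv (PowerSeries.C p) = PowerSeries.C (Polynomial.derivative p) := by
  ext1 n
  simp only [dv, PowerSeries.coeff_mk, PowerSeries.coeff_C]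
  split_ifs <;> simp
lemma dv_X : dv (PowerSeries.X : PowerSeries (Polynomial R)) = 0 := by
  ext1 n
  simp only [dv, PowerSeries.coeff_mk, PowerSeries.coeff_X]
  split_ifs <;> simp
lemma dv_one : dv (1 : PowerSeries (Polynomial R)) = 0 := by
  simpa using dv_C (1 : Polynomial R)
lemma dv_map (F : PowerSeries R) : dv (PowerSeries.map Polynomial.C F) = 0 := by
  ext1 n; simp [dv]

/-- The quadratic method. -/
theorem quadratic_method [IsDomain R] (y : R) (hy : y ≠ 0) (H : PowerSeries (Polynomial R))
    (k : PowerSeries R) (hH0 : PowerSeries.coeff 0 H = 0)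
    (hH : PowerSeries.C Polynomial.X * H = PowerSeries.X * (1 + PowerSeries.C Polynomial.X) * (1 + H)
      * (PowerSeries.C (Polynomial.C y) * PowerSeries.C Polynomial.X + PowerSeries.C Polynomial.X * H
        + PowerSeries.C (Polynomial.C y) * H
        - PowerSeries.C (Polynomial.C y) * PowerSeries.map Polynomial.C k)) :
    ∃ U : PowerSeries R, U = PowerSeries.X * ((1 + U) ^ 3 * (PowerSeries.C y + U)) ∧
      PowerSeries.C y * k = PowerSeries.C y * U - PowerSeries.C y * U ^ 2 - U ^ 3 := by
  obtain ⟨V, hV⟩ := exists_fix ((1 + PowerSeries.C Polynomial.X) *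
    ((PowerSeries.C (Polynomial.C y) * PowerSeries.C Polynomial.X + PowerSeries.C Polynomial.X * H
        + PowerSeries.C (Polynomial.C y) * H
        - PowerSeries.C (Polynomial.C y) * PowerSeries.map Polynomial.C k)
      + (1 + H) * (PowerSeries.C Polynomial.X + PowerSeries.C (Polynomial.C y))))
  have h1 := congrArg (ev V) hH
  have h3 := congrArg (fun F => ev V (dv F)) hH
  simp only [dv_add, dv_sub, dv_mul, dv_C, dv_X, dv_one, dv_map, Polynomial.derivative_X,
    Polynomial.derivative_C] at h3
  simp only [map_add, map_sub, map_mul, ev_C, ev_X, ev_map, map_one, map_zero,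
    Polynomial.aeval_X, Polynomial.aeval_C, PowerSeries.algebraMap_apply, Algebra.algebraMap_self,
    RingHom.id_apply] at h1 h3 hV
  have hU0 : PowerSeries.constantCoeff (ev V H) = 0 := by
    rw [← PowerSeries.coeff_zero_eq_constantCoeff_apply]
    simp only [ev, RingHom.coe_mk, MonoidHom.coe_mk, OneHom.coe_mk, evFun, PowerSeries.coeff_mk]
    simp [hH0]
  generalize ev V H = U at *
  generalize ev V (dv H) = U' at *
  have hV0 : PowerSeries.constantCoeff V = 0 := by rw [hV]; simp
  set t : PowerSeries R := PowerSeries.X with ht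
  set Y := PowerSeries.C y with hY
  have hV1 : (1 + V) ≠ 0 := fun h => by
    have := congrArg PowerSeries.constantCoeff h
    simp [hV0] at this
  have hU1 : (1 + U) ≠ 0 := fun h => by
    have := congrArg PowerSeries.constantCoeff h
    simp [hU0] at this
  have ht0 : t ≠ 0 := PowerSeries.X_ne_zero
  have hY0 : Y ≠ 0 := fun h => hy (by simpa [hY] using congrArg PowerSeries.constantCoeff h)
  have e3 : U = t * (1 + U) * (Y * V + V * U + Y * U - Y * k) + t * (1 + V) * (1 + U) * (Y + U) := by
    linear_combination h3 - U' * hV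
  have a1 : U = t * (1 + V) ^ 2 * (1 + U) * (Y + U) := by
    linear_combination (1 + V) * e3 - h1
  have a2 : V = t * (1 + V) * (1 + U) ^ 2 * (V + Y) := by
    linear_combination (1 + U) * hV - h1
  have a3 : U * (1 + U) * (V + Y) = V * (1 + V) * (Y + U) := by
    linear_combination (1 + U) * (V + Y) * a1 - (1 + V) * (Y + U) * a2
  have a4 : (U - V) * (Y + Y * (U + V) + U * V) = 0 := by linear_combination a3
  have a5 : Y + Y * (U + V) + U * V ≠ 0 := fun h => by
    have := congrArg PowerSeries.constantCoeff h
    simp [hU0, hV0, hY] at this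
    exact hy this
  have a6 : V = U := by
    rcases mul_eq_zero.1 a4 with h | h
    · exact (sub_eq_zero.1 h).symm
    · exact absurd h a5
  rw [a6] at h1 a1
  have b1 : U = t * ((1 + U) ^ 3 * (Y + U)) := by linear_combination a1
  refine ⟨U, b1, ?_⟩
  have b2 : t * (1 + U) ^ 2 * (Y * U + U * U + Y * U - Y * k - U * (1 + U) * (Y + U)) = 0 := by
    linear_combination U * b1 - h1
  have b3 := (mul_eq_zero.1 b2).resolve_left (mul_ne_zero ht0 (pow_ne_zero _ hU1))
  linear_combination -b3

lemma lag_step (φ : Polynomial R) (U : PowerSeries R)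
    (hU : U = PowerSeries.X * Polynomial.aeval U φ) (n m : ℕ) :
    PowerSeries.coeff (n + 1) (Polynomial.aeval U (Polynomial.X ^ (m + 1) : Polynomial R)) =
      PowerSeries.coeff n (Polynomial.aeval U (Polynomial.X ^ m * φ)) := by
  have : (Polynomial.aeval U (Polynomial.X ^ (m + 1) : Polynomial R)) =
      PowerSeries.X * Polynomial.aeval U (Polynomial.X ^ m * φ) := by
    simp only [map_mul, map_pow, Polynomial.aeval_X]
    rw [pow_succ]
    conv_lhs => rw [mul_comm]; enter [1]; rw [hU]
    ring
  rw [this, PowerSeries.coeff_succ_X_mul]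

lemma lag_zero (U : PowerSeries R) (hU : PowerSeries.constantCoeff U = 0) (p : Polynomial R) :
    PowerSeries.coeff 0 (Polynomial.aeval U p) = p.coeff 0 := by
  rw [PowerSeries.coeff_zero_eq_constantCoeff_apply, Polynomial.aeval_def, Polynomial.hom_eval₂, hU,
    Polynomial.coeff_zero_eq_eval_zero, Polynomial.eval]
  congr 1

/-- Lagrange inversion. -/
theorem lagrange [IsDomain R] [CharZero R] (φ : Polynomial R) (U : PowerSeries R)
    (hU : U = PowerSeries.X * Polynomial.aeval U φ) (n : ℕ) (h : Polynomial R) :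
    ((n : R) + 1) * PowerSeries.coeff (n + 1) (Polynomial.aeval U h) =
      (Polynomial.derivative h * φ ^ (n + 1)).coeff n := by
  have hU0 : PowerSeries.constantCoeff U = 0 := by rw [hU]; simp
  induction n generalizing h with
  | zero =>
    induction h using Polynomial.induction_on' with
    | add p q hp hq =>
      rw [map_add, map_add, mul_add, hp, hq, map_add, add_mul, Polynomial.coeff_add]
    | monomial m a =>
      rw [← Polynomial.C_mul_X_pow_eq_monomial, map_mul, Polynomial.aeval_C,
        PowerSeries.algebraMap_apply, Algebra.algebraMap_self, RingHom.id_apply,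
        PowerSeries.coeff_C_mul]
      rcases m with _ | m
      · simp [PowerSeries.coeff_one]
      · rw [lag_step φ U hU, lag_zero U hU0]
        simp only [Polynomial.derivative_C_mul_X_pow, Polynomial.mul_coeff_zero,
          Polynomial.coeff_X_pow, Polynomial.coeff_C_zero]
        rcases m with _ | m
        · simp
        · simp
  | succ n ih =>
    induction h using Polynomial.induction_on' with
    | add p q hp hq =>
      rw [map_add, map_add, mul_add, hp, hq, map_add, add_mul, Polynomial.coeff_add]
    | monomial m a =>
      rw [← Polynomial.C_mul_X_pow_eq_monomial, map_mul, Polynomial.aeval_C,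
        PowerSeries.algebraMap_apply, Algebra.algebraMap_self, RingHom.id_apply,
        PowerSeries.coeff_C_mul]
      rcases m with _ | m
      · simp [PowerSeries.coeff_one]
      · rw [lag_step φ U hU]
        have hne : ((n : R) + 1) ≠ 0 := by exact_mod_cast Nat.succ_ne_zero n
        apply mul_left_cancel₀ hne
        have h1 := ih (Polynomial.X ^ m * φ)
        set P : Polynomial R := Polynomial.X ^ m * φ ^ (n + 2) with hP
        have h2 : (Polynomial.C ((n : R) + 2)) * (Polynomial.derivative (Polynomial.X ^ m * φ) * φ ^ (n + 1))
            = Polynomial.derivative P + Polynomial.C ((n : R) + 1) *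
              (Polynomial.derivative (Polynomial.X ^ m) * φ ^ (n + 2)) := by
          simp only [hP, Polynomial.derivative_mul, Polynomial.derivative_pow (R := R) φ,
            map_add, map_natCast, map_one, map_ofNat, Nat.cast_add, Nat.cast_ofNat]
          rw [show n + 2 - 1 = n + 1 by omega]
          ring
        have h3 := congrArg (fun q => Polynomial.coeff q n) h2
        have h4 : (Polynomial.derivative (Polynomial.X ^ m) * φ ^ (n + 2)).coeff n
            = (m : R) * P.coeff (n + 1) := by
          rcases m with _ | m
          · simp
          · rw [hP, pow_succ', mul_assoc, Polynomial.coeff_X_mul, ← pow_succ',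
              Polynomial.derivative_X_pow, mul_assoc, Polynomial.coeff_C_mul]
            simp
        simp only [Polynomial.coeff_add, Polynomial.coeff_C_mul, h4,
          Polynomial.coeff_derivative] at h3
        have h5 : (Polynomial.derivative (Polynomial.C a * Polynomial.X ^ (m + 1)) * φ ^ (n + 1 + 1)).coeff (n + 1)
            = a * ((m : R) + 1) * P.coeff (n + 1) := by
          rw [Polynomial.derivative_C_mul_X_pow, mul_assoc, Polynomial.coeff_C_mul, hP]
          push_cast
          rfl
        rw [h5]
        push_cast
        linear_combination (a * ((n : R) + 2)) * h1 + a * h3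

theorem alg_final [IsDomain R] [CharZero R] (y : R) (U k : PowerSeries R)
    (hU : U = PowerSeries.X * ((1 + U) ^ 3 * (PowerSeries.C y + U)))
    (hk : PowerSeries.C y * k = PowerSeries.C y * U - PowerSeries.C y * U ^ 2 - U ^ 3) (n : ℕ) :
    ((n : R) + 1) * ((n : R) + 2) * (y * PowerSeries.coeff (n + 1) k) =
      2 * ((Polynomial.C y + Polynomial.X) ^ (n + 2) *
        (1 + Polynomial.X) ^ (3 * (n + 1)) : Polynomial R).coeff n := by
  set φ : Polynomial R := (1 + Polynomial.X) ^ 3 * (Polynomial.C y + Polynomial.X) with hφ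
  set h : Polynomial R := Polynomial.C y * Polynomial.X - Polynomial.C y * Polynomial.X ^ 2
    - Polynomial.X ^ 3 with hh
  have hU' : U = PowerSeries.X * Polynomial.aeval U φ := by
    simpa [hφ, PowerSeries.algebraMap_apply] using hU
  have hh' : PowerSeries.C y * k = Polynomial.aeval U h := by
    simpa [hh, PowerSeries.algebraMap_apply] using hk
  have L := lagrange φ U hU' n h
  rw [← hh', PowerSeries.coeff_C_mul] at L
  set P2 : Polynomial R := (1 + Polynomial.X) * (Polynomial.C y + Polynomial.X) * φ ^ (n + 1) with hP2
  have e1 : (Polynomial.derivative (Polynomial.X * P2)).coeff n = ((n : R) + 1) * P2.coeff n := by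
    rw [Polynomial.coeff_derivative, Polynomial.coeff_X_mul]; ring
  have e2 : Polynomial.C ((n : R) + 2) * (Polynomial.derivative h * φ ^ (n + 1)) =
      2 * ((Polynomial.C y + Polynomial.X) ^ (n + 2) * (1 + Polynomial.X) ^ (3 * (n + 1)))
      - Polynomial.derivative (Polynomial.X * P2) + Polynomial.C ((n : R) + 1) * P2 := by
    have e3 : ((Polynomial.C y + Polynomial.X) ^ (n + 2) * (1 + Polynomial.X) ^ (3 * (n + 1)))
        = (Polynomial.C y + Polynomial.X) * φ ^ (n + 1) := by
      rw [hφ, mul_pow, ← pow_mul]; ring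
    have e4 : Polynomial.derivative (Polynomial.X * P2) =
        (Polynomial.derivative (Polynomial.X * ((1 + Polynomial.X) * (Polynomial.C y + Polynomial.X)))
          * φ + (Polynomial.X * ((1 + Polynomial.X) * (Polynomial.C y + Polynomial.X)))
            * (Polynomial.C ((n : R) + 1) * Polynomial.derivative φ)) * φ ^ n := by
      rw [hP2]
      simp only [Polynomial.derivative_mul, Polynomial.derivative_pow (R := R) φ,
        map_add, map_natCast, map_one, Nat.cast_add, Nat.cast_one, Nat.add_sub_cancel]
      ring
    have C3 : (Polynomial.C (3 : R)) = 3 := map_ofNat _ 3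
    have C2 : (Polynomial.C (2 : R)) = 2 := map_ofNat _ 2
    have e5 : (Polynomial.X * ((1 + Polynomial.X) * (Polynomial.C y + Polynomial.X)))
        * Polynomial.derivative φ = (3 * Polynomial.X * (Polynomial.C y + Polynomial.X)
          + Polynomial.X * (1 + Polynomial.X)) * φ := by
      rw [hφ]
      simp [Polynomial.derivative_mul, Polynomial.derivative_pow]
      rw [C3]
      ring
    rw [e3, e4, hP2, hh]
    simp [Polynomial.derivative_mul, Polynomial.derivative_pow]
    rw [C2, C3]
    linear_combination (((n : Polynomial R) + 1) * φ ^ n) * e5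
  have e6 := congrArg (fun q => Polynomial.coeff q n) e2
  have e7 : ((2 : Polynomial R) * ((Polynomial.C y + Polynomial.X) ^ (n + 2) *
      (1 + Polynomial.X) ^ (3 * (n + 1)))).coeff n = 2 * ((Polynomial.C y + Polynomial.X) ^ (n + 2) *
      (1 + Polynomial.X) ^ (3 * (n + 1)) : Polynomial R).coeff n := by
    rw [← Polynomial.coeff_C_mul]; simp
  simp only [Polynomial.coeff_add, Polynomial.coeff_sub, Polynomial.coeff_C_mul, e1, e7] at e6
  linear_combination ((n : R) + 2) * L + e6
end alg

lemma final_coeff (n k : ℕ) :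
    (((Polynomial.C (Polynomial.X : Polynomial ℤ) + Polynomial.X) ^ (n + 2) *
        (1 + Polynomial.X) ^ (3 * (n + 1)) : Polynomial (Polynomial ℤ)).coeff n).coeff (k + 2) =
      ((3 * (n + 1)).choose k : ℤ) * ((n + 2).choose (k + 2) : ℤ) := by
  rw [Polynomial.coeff_mul, Polynomial.finsetSum_coeff]
  have hterm : ∀ ij ∈ HasAntidiagonal.antidiagonal n,
      ((((Polynomial.C (Polynomial.X : Polynomial ℤ) + Polynomial.X) ^ (n + 2)).coeff ij.1 *
        ((1 + Polynomial.X : Polynomial (Polynomial ℤ)) ^ (3 * (n + 1))).coeff ij.2).coeff (k + 2))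
      = if n + 2 - ij.1 = k + 2 then ((n + 2).choose ij.1 : ℤ) * ((3 * (n + 1)).choose ij.2 : ℤ)
        else 0 := by
    rintro ⟨i, j⟩ hij
    rw [add_comm (Polynomial.C _), Polynomial.coeff_X_add_C_pow, Polynomial.coeff_one_add_X_pow,
      mul_assoc, ← Nat.cast_mul, Polynomial.coeff_mul_natCast, Polynomial.coeff_X_pow]
    by_cases h : n + 2 - i = k + 2
    · simp [h]
    · simp [h, Ne.symm h]
  rw [Finset.sum_congr rfl hterm]
  by_cases hk : k ≤ n
  · rw [Finset.sum_eq_single (n - k, k)]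
    · rw [if_pos (by simp; omega)]
      have : (n + 2).choose (n - k) = (n + 2).choose (k + 2) := by
        rw [← Nat.choose_symm (by omega : k + 2 ≤ n + 2)]
        congr 1
        omega
      simp only [this]
      ring
    · rintro ⟨i, j⟩ hij hne
      simp only [HasAntidiagonal.mem_antidiagonal] at hij
      rw [if_neg]
      intro h
      apply hne
      simp only [Prod.mk.injEq]
      simp only at h
      omega
    · intro h
      simp at h
      omega
  · rw [Nat.choose_eq_zero_of_lt (by omega : n + 2 < k + 2)]
    simp only [Nat.cast_zero, mul_zero]
    refine Finset.sum_eq_zero ?_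
    rintro ⟨i, j⟩ hij
    rw [if_neg]
    simp only
    omega

end algpart

namespace BT

/-- length of the left spine. -/
def lsp : BT → ℕ
  | leaf => 0
  | node l _ => lsp l + 1

/-- graft `A` on the left spine of `S`, at depth `c`. -/
def ins (A : BT) : BT → ℕ → BT
  | S, 0 => node A S
  | leaf, _ + 1 => node A leaf
  | node P Q, c + 1 => node (ins A P c) Q

lemma ins_zero (A S : BT) : ins A S 0 = node A S := by cases S <;> rfl

lemma ins_succ (A P Q : BT) (c : ℕ) : ins A (node P Q) (c + 1) = node (ins A P c) Q := rfl

lemma size_ins (A S : BT) (c : ℕ) : (ins A S c).size = A.size + S.size + 1 := by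
  induction S generalizing c with
  | leaf => cases c <;> rfl
  | node P Q ihP ihQ =>
    cases c with
    | zero => rfl
    | succ c => rw [ins_succ, size, ihP, size]; omega

lemma lsp_ins (A S : BT) (c : ℕ) (hc : c ≤ lsp S) : lsp (ins A S c) = lsp A + 1 + c := by
  induction S generalizing c with
  | leaf =>
    have : c = 0 := by simpa [lsp] using hc
    subst this; rfl
  | node P Q ihP ihQ =>
    cases c with
    | zero => rfl
    | succ c =>
      rw [ins_succ, lsp, ihP c (by simpa [lsp] using hc)]
      omega

lemma Rot.size_eq {T T' : BT} (h : Rot T T') : T.size = T'.size := by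
  induction h with
  | rotate A B C => simp only [size]; omega
  | left r _ ih => simp only [size]; omega
  | right l _ ih => simp only [size]; omega

lemma tle.size_eq {T T' : BT} (h : tle T T') : T.size = T'.size := by
  induction h with
  | refl => rfl
  | tail _ h ih => rw [ih, h.size_eq]

lemma tle.left {l l' : BT} (r : BT) (h : tle l l') : tle (node l r) (node l' r) :=
  Relation.ReflTransGen.lift (fun x => node x r) (fun _ _ h => Rot.left r h) _ _ h

lemma tle.right (l : BT) {r r' : BT} (h : tle r r') : tle (node l r) (node l r') :=
  Relation.ReflTransGen.lift (fun x => node l x) (fun _ _ h => Rot.right l h) _ _ h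

lemma ins_tle (A S : BT) (c : ℕ) : tle (ins A S c) (node A S) := by
  induction S generalizing c with
  | leaf => cases c <;> exact Relation.ReflTransGen.refl
  | node P Q ihP ihQ =>
    cases c with
    | zero => exact Relation.ReflTransGen.refl
    | succ c =>
      exact ((ihP c).left Q).trans (Relation.ReflTransGen.single (Rot.rotate A P Q))

lemma rot_ins {T A S : BT} {c : ℕ} (hc : c ≤ lsp S) (h : Rot T (ins A S c)) :
    ∃ A' S' c', tle A' A ∧ tle S' S ∧ c' ≤ lsp S' ∧ T = ins A' S' c' := by
  induction S generalizing c T with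
  | leaf =>
    have : c = 0 := by simpa [lsp] using hc
    subst this
    rw [ins_zero] at h
    cases h with
    | left _ h =>
      exact ⟨_, leaf, 0, Relation.ReflTransGen.single h, Relation.ReflTransGen.refl, le_rfl, rfl⟩
    | right _ h => cases h
  | node P Q ihP ihQ =>
    cases c with
    | zero =>
      rw [ins_zero] at h
      cases h with
      | rotate _ _ _ =>
        exact ⟨A, node P Q, 1, Relation.ReflTransGen.refl, Relation.ReflTransGen.refl,
          by simp [lsp], by rw [ins_succ, ins_zero]⟩
      | left _ h =>
        exact ⟨_, node P Q, 0, Relation.ReflTransGen.single h, Relation.ReflTransGen.refl,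
          Nat.zero_le _, rfl⟩
      | right _ h =>
        exact ⟨A, _, 0, Relation.ReflTransGen.refl, Relation.ReflTransGen.single h,
          Nat.zero_le _, (ins_zero _ _).symm⟩
    | succ c =>
      have hc' : c ≤ lsp P := by simpa [lsp] using hc
      rw [ins_succ] at h
      generalize hX : ins A P c = X at h
      cases h with
      | rotate _ B C =>
        refine ⟨A, node (node P B) C, c + 2, Relation.ReflTransGen.refl,
          Relation.ReflTransGen.single (Rot.rotate P B C), ?_, ?_⟩
        · simp only [lsp]; omega
        · rw [ins_succ, ins_succ, hX]
      | left _ h =>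
        subst hX
        obtain ⟨A', S', c', h1, h2, h3, rfl⟩ := ihP hc' h
        exact ⟨A', node S' Q, c' + 1, h1, h2.left Q, by simpa [lsp] using h3, rfl⟩
      | right _ h =>
        subst hX
        exact ⟨A, node P _, c + 1, Relation.ReflTransGen.refl,
          Relation.ReflTransGen.single (Rot.right P h), hc, rfl⟩

lemma tle_node {T L R : BT} (h : tle T (node L R)) :
    ∃ A S c, tle A L ∧ tle S R ∧ c ≤ lsp S ∧ T = ins A S c := by
  induction h using Relation.ReflTransGen.head_induction_on with
  | refl => exact ⟨L, R, 0, Relation.ReflTransGen.refl, Relation.ReflTransGen.refl,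
      Nat.zero_le _, (ins_zero _ _).symm⟩
  | head h _ ih =>
    obtain ⟨A, S, c, h1, h2, h3, rfl⟩ := ih
    obtain ⟨A', S', c', h1', h2', h3', rfl⟩ := rot_ins h3 h
    exact ⟨A', S', c', h1'.trans h1, h2'.trans h2, h3', rfl⟩

lemma ins_inj {A S A' S' : BT} {c c' : ℕ} (hs : A.size = A'.size) (hc : c ≤ lsp S)
    (hc' : c' ≤ lsp S') (h : ins A S c = ins A' S' c') : A = A' ∧ S = S' ∧ c = c' := by
  induction c generalizing S S' c' with
  | zero =>
    cases c' with
    | zero => simpa [ins_zero] using h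
    | succ c' =>
      cases S' with
      | leaf => simp [lsp] at hc'
      | node P Q =>
        rw [ins_zero, ins_succ] at h
        injection h with h1 h2
        have := congrArg size h1
        rw [size_ins] at this
        omega
  | succ c ih =>
    cases S with
    | leaf => simp [lsp] at hc
    | node P Q =>
      cases c' with
      | zero =>
        rw [ins_zero, ins_succ] at h
        injection h with h1 h2
        have := congrArg size h1
        rw [size_ins] at this
        omega
      | succ c' =>
        cases S' with
        | leaf => simp [lsp] at hc'
        | node P' Q' =>
          rw [ins_succ, ins_succ] at h
          injection h with h1 h2
          obtain ⟨e1, e2, e3⟩ := ih (by simpa [lsp] using hc) (by simpa [lsp] using hc') h1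
          subst e1 e2 e3 h2
          exact ⟨rfl, rfl, rfl⟩

/-- number of agreements of two words. -/
def agr : List ℕ → List ℕ → ℕ
  | a :: u, b :: v => (if a = b then 1 else 0) + agr u v
  | [], _ => 0
  | _ :: _, [] => 0

lemma agr_append (u v u' v' : List ℕ) (h : u.length = v.length) :
    agr (u ++ u') (v ++ v') = agr u v + agr u' v' := by
  induction u generalizing v with
  | nil =>
    have : v = [] := by simpa using h.symm
    subst this; simp [agr]
  | cons a u ih =>
    cases v with
    | nil => simp at h
    | cons b v => simp only [List.cons_append, agr, ih v (by simpa using h)]; omega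

lemma filter_agr (u v : List ℕ) (m : ℕ) (hu : u.length = m) (hv : v.length = m) :
    ((List.range m).filter (fun i => u.getD i 0 == v.getD i 0)).length = agr u v := by
  induction m generalizing u v with
  | zero =>
    have : u = [] := by simpa using hu
    subst this; simp [agr]
  | succ m ih =>
    cases u with
    | nil => simp at hu
    | cons a u =>
      cases v with
      | nil => simp at hv
      | cons b v =>
        rw [List.range_succ_eq_map, List.filter_cons, List.filter_map, agr,
          ← ih u v (by simpa using hu) (by simpa using hv)]
        have e : ((fun i => (a :: u).getD i 0 == (b :: v).getD i 0) ∘ Nat.succ)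
            = (fun i => u.getD i 0 == v.getD i 0) := by
          funext i; simp
        rw [e]
        by_cases hab : a = b
        · simp [hab]; omega
        · simp [hab]

lemma length_canopyAux (b : ℕ) (T : BT) : (canopyAux b T).length = T.size + 1 := by
  induction T generalizing b with
  | leaf => rfl
  | node l r ihl ihr => simp only [canopyAux, List.length_append, ihl, ihr, size]; omega

/-- canopy without its first letter. -/
def ctail (T : BT) : List ℕ := (canopyAux 1 T).tail

lemma canopyAux_one (T : BT) : canopyAux 1 T = 1 :: ctail T := by
  induction T with
  | leaf => rfl
  | node l r ihl ihr => simp only [ctail, canopyAux]; rw [ihl]; rfl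

lemma ctail_node (l r : BT) : ctail (node l r) = ctail l ++ canopyAux 0 r := by
  simp only [ctail, canopyAux]; rw [canopyAux_one l]; rfl

lemma length_ctail (T : BT) : (ctail T).length = T.size := by
  simp [ctail, length_canopyAux]

lemma canopyAux_ins_lt (A S : BT) (b c : ℕ) (hc : c < lsp S) :
    canopyAux b (ins A S c) = canopyAux 1 A ++ canopyAux 1 S := by
  induction S generalizing b c with
  | leaf => simp [lsp] at hc
  | node P Q ihP ihQ =>
    cases c with
    | zero => rfl
    | succ c =>
      rw [ins_succ, canopyAux, ihP 1 c (by simpa [lsp] using hc), canopyAux, List.append_assoc]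

lemma canopyAux_ins_eq (A S : BT) (b : ℕ) :
    canopyAux b (ins A S (lsp S)) = canopyAux 1 A ++ 0 :: ctail S := by
  induction S generalizing b with
  | leaf => rfl
  | node P Q ihP ihQ =>
    rw [lsp, ins_succ, canopyAux, ihP 1, ctail_node, List.append_assoc, List.cons_append]

lemma ctail_ins_lt (A S : BT) (c : ℕ) (hc : c < lsp S) :
    ctail (ins A S c) = ctail A ++ 1 :: ctail S := by
  rw [ctail, canopyAux_ins_lt A S 1 c hc, canopyAux_one, canopyAux_one]; rfl

lemma ctail_ins_eq (A S : BT) : ctail (ins A S (lsp S)) = ctail A ++ 0 :: ctail S := by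
  rw [ctail, canopyAux_ins_eq, canopyAux_one]; rfl

/-- agreement apart from the first position. -/
def agt (p : BT × BT) : ℕ := agr (ctail p.1) (ctail p.2)

lemma agreeCount_eq {p : BT × BT} (h : p.1.size = p.2.size) : agreeCount p = agt p + 1 := by
  rw [agreeCount, filter_agr (canopy p.1) (canopy p.2) _ (length_canopyAux 1 p.1)
    ((length_canopyAux 1 p.2).trans (by rw [h])), canopy, canopy, canopyAux_one, canopyAux_one,
    agr, agt]
  simp; omega

/-- composition of two intervals. -/
def J (a b : BT × BT) (c : ℕ) : BT × BT := (ins a.1 b.1 c, node a.2 b.2)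

/-- extra agreement. -/
def ex (b : BT × BT) (c : ℕ) : ℕ := if c < lsp b.1 ∨ b.2.size = 0 then 1 else 0

lemma agt_J (a b : BT × BT) (c : ℕ) (ha : a.1.size = a.2.size) (hb : b.1.size = b.2.size)
    (hc : c ≤ lsp b.1) : agt (J a b c) = agt a + (agt b + ex b c) := by
  have hl : (ctail a.1).length = (ctail a.2).length := by rw [length_ctail, length_ctail, ha]
  obtain ⟨S, R⟩ := b
  simp only at hb hc
  unfold agt J ex
  simp only
  rw [ctail_node]
  cases R with
  | leaf =>
    cases S with
    | node _ _ => simp [size] at hb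
    | leaf =>
      have : c = 0 := by simpa [lsp] using hc
      subst this
      rw [ins_zero, ctail_node, agr_append _ _ _ _ hl]
      simp [canopyAux, ctail, agr, size]
  | node P Q =>
    have e : canopyAux 0 (node P Q) = 1 :: ctail (node P Q) := by
      rw [← canopyAux_one]; rfl
    rw [e]
    rcases hc.lt_or_eq with h | h
    · rw [ctail_ins_lt _ _ _ h, agr_append _ _ _ _ hl, agr]
      simp [h]; omega
    · rw [h, ctail_ins_eq, agr_append _ _ _ _ hl, agr]
      simp [size]

lemma finite_size_le (n : ℕ) : {T : BT | T.size ≤ n}.Finite := by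
  induction n with
  | zero =>
    refine (Set.finite_singleton leaf).subset ?_
    rintro (_ | ⟨l, r⟩) h
    · rfl
    · simp [size] at h
  | succ n ih =>
    refine ((Set.finite_singleton leaf).union ((ih.prod ih).image (fun q => node q.1 q.2))).subset ?_
    rintro (_ | ⟨l, r⟩) h
    · left; rfl
    · right
      refine ⟨(l, r), ?_, rfl⟩
      simp only [size, Set.mem_ofPred_eq] at h
      simp only [Set.mem_prod, Set.mem_ofPred_eq]
      omega

lemma finite_interval (n : ℕ) : {p : BT × BT | interval p n}.Finite := by
  refine ((finite_size_le n).prod (finite_size_le n)).subset ?_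
  rintro ⟨a, b⟩ ⟨h1, h2, -⟩
  exact ⟨h1.le, h2.le⟩

/-- the finite set of intervals of size `n`. -/
noncomputable def I (n : ℕ) : Finset (BT × BT) := (finite_interval n).toFinset

lemma mem_I {n : ℕ} {p : BT × BT} : p ∈ I n ↔ interval p n := by simp [I]

lemma I_zero : I 0 = {(leaf, leaf)} := by
  ext ⟨a, b⟩
  rw [mem_I, Finset.mem_singleton]
  constructor
  · rintro ⟨h1, h2, -⟩
    cases a with
    | node _ _ => simp [size] at h1
    | leaf =>
      cases b with
      | node _ _ => simp [size] at h2
      | leaf => rfl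
  · rintro h
    rw [h]
    exact ⟨rfl, rfl, Relation.ReflTransGen.refl⟩

lemma sum_I {M : Type*} [AddCommMonoid M] (n : ℕ) (f : BT × BT → M) :
    ∑ p ∈ I (n + 1), f p = ∑ ij ∈ Finset.HasAntidiagonal.antidiagonal n, ∑ a ∈ I ij.1, ∑ b ∈ I ij.2,
      ∑ c ∈ Finset.range (lsp b.1 + 1), f (J a b c) := by
  simp_rw [Finset.sum_sigma']
  symm
  refine Finset.sum_bij (fun z _ => J z.2.1 z.2.2.1 z.2.2.2) ?_ ?_ ?_ ?_
  · rintro ⟨⟨i, j⟩, a, b, c⟩ h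
    simp only [Finset.mem_sigma, Finset.HasAntidiagonal.mem_antidiagonal, mem_I, Finset.mem_range] at h
    obtain ⟨h1, ⟨ha1, ha2, ha3⟩, ⟨hb1, hb2, hb3⟩, hc⟩ := h
    simp only [mem_I]
    refine ⟨?_, ?_, ?_⟩
    · simp only [J, size_ins]; omega
    · simp only [J, size]; omega
    · exact (ins_tle _ _ _).trans ((ha3.left _).trans (hb3.right _))
  · rintro ⟨⟨i, j⟩, a, b, c⟩ h ⟨⟨i', j'⟩, a', b', c'⟩ h' heq
    simp only [Finset.mem_sigma, Finset.HasAntidiagonal.mem_antidiagonal, mem_I, Finset.mem_range] at h h'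
    obtain ⟨h1, ⟨ha1, ha2, ha3⟩, ⟨hb1, hb2, hb3⟩, hc⟩ := h
    obtain ⟨h1', ⟨ha1', ha2', ha3'⟩, ⟨hb1', hb2', hb3'⟩, hc'⟩ := h'
    obtain ⟨a1, a2⟩ := a
    obtain ⟨b1, b2⟩ := b
    obtain ⟨a1', a2'⟩ := a'
    obtain ⟨b1', b2'⟩ := b'
    simp only [J, Prod.mk.injEq] at *
    obtain ⟨e1, e2⟩ := heq
    injection e2 with e3 e4
    subst e3 e4
    obtain ⟨e5, e6, e7⟩ := ins_inj (by omega) (by omega) (by omega) e1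
    subst e5 e6 e7
    have : i = i' := by omega
    subst this
    have : j = j' := by omega
    subst this
    rfl
  · rintro ⟨T, T'⟩ h
    rw [mem_I] at h
    obtain ⟨h1, h2, h3⟩ := h
    simp only at h1 h2 h3
    cases T' with
    | leaf => simp [size] at h2
    | node L R =>
      obtain ⟨A, S, c, hA, hS, hc, rfl⟩ := tle_node h3
      simp only [size] at h2
      refine ⟨⟨(L.size, R.size), (A, L), (S, R), c⟩, ?_, rfl⟩
      simp only [Finset.mem_sigma, Finset.HasAntidiagonal.mem_antidiagonal, mem_I, Finset.mem_range]
      exact ⟨by omega, ⟨hA.size_eq, rfl, hA⟩, ⟨hS.size_eq, rfl, hS⟩, by omega⟩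
  · intros; rfl

open Polynomial in
/-- weight of an interval. -/
noncomputable def wt (p : BT × BT) : Polynomial (Polynomial ℤ) := C (X ^ agt p) * (1 + X) ^ lsp p.1

open Polynomial in
/-- weighted count of intervals. -/
noncomputable def g (n : ℕ) : Polynomial (Polynomial ℤ) := ∑ p ∈ I n, wt p

open Polynomial in
/-- weighted count of right parts. -/
noncomputable def e (n : ℕ) : Polynomial (Polynomial ℤ) :=
  ∑ b ∈ I n, ∑ c ∈ Finset.range (lsp b.1 + 1), C (X ^ (agt b + ex b c)) * (1 + X) ^ c

open Polynomial in
lemma g_succ (n : ℕ) :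
    g (n + 1) = (1 + X) * ∑ ij ∈ Finset.HasAntidiagonal.antidiagonal n, g ij.1 * e ij.2 := by
  rw [g, sum_I, Finset.mul_sum]
  refine Finset.sum_congr rfl fun ij _ => ?_
  rw [g, e, Finset.sum_mul_sum, Finset.mul_sum]
  refine Finset.sum_congr rfl fun a ha => ?_
  rw [Finset.mul_sum]
  refine Finset.sum_congr rfl fun b hb => ?_
  rw [Finset.mul_sum, Finset.mul_sum]
  refine Finset.sum_congr rfl fun c hc => ?_
  rw [mem_I] at ha hb
  rw [Finset.mem_range] at hc
  rw [wt, agt_J a b c (by rw [ha.1, ha.2.1]) (by rw [hb.1, hb.2.1]) (by omega), wt]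
  simp only [J]
  rw [lsp_ins _ _ _ (by omega), pow_add, pow_add, pow_add, C_mul]
  ring

open Polynomial in
lemma g_zero : g 0 = 1 := by
  rw [g, I_zero, Finset.sum_singleton, wt]
  simp [agt, ctail, canopyAux, agr, lsp]

open Polynomial in
lemma e_zero : e 0 = C X := by
  rw [e, I_zero, Finset.sum_singleton]
  simp [agt, ctail, canopyAux, agr, lsp, ex, size]

open Polynomial in
lemma e_succ (n : ℕ) : X * e (n + 1) =
    X * g (n + 1) + C X * g (n + 1) - C X * C ((g (n + 1)).eval 0) := by
  have h0 : (g (n + 1)).eval 0 = ∑ p ∈ I (n + 1), X ^ agt p := by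
    rw [g, eval_finsetSum]
    refine Finset.sum_congr rfl fun p _ => ?_
    simp [wt]
  rw [h0, map_sum, g, e, Finset.mul_sum, Finset.mul_sum, Finset.mul_sum, Finset.mul_sum,
    ← Finset.sum_add_distrib, ← Finset.sum_sub_distrib]
  refine Finset.sum_congr rfl fun b hb => ?_
  rw [mem_I] at hb
  have hb2 : b.2.size ≠ 0 := by rw [hb.2.1]; omega
  rw [Finset.sum_range_succ]
  have h1 : ∑ c ∈ Finset.range (lsp b.1), C (X ^ (agt b + ex b c)) * (1 + X : Polynomial (Polynomial ℤ)) ^ c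
      = C (X ^ agt b) * C X * ∑ c ∈ Finset.range (lsp b.1), (1 + X : Polynomial (Polynomial ℤ)) ^ c := by
    rw [Finset.mul_sum]
    refine Finset.sum_congr rfl fun c hc => ?_
    rw [Finset.mem_range] at hc
    simp [ex, hc, pow_add]
  have h2 : ex b (lsp b.1) = 0 := by simp [ex, hb2]
  have h3 := mul_geom_sum (1 + X : Polynomial (Polynomial ℤ)) (lsp b.1)
  rw [h1, h2, wt, add_zero]
  linear_combination C (X ^ agt b) * C X * h3

end BT

lemma tamari_count (n k : ℕ) :
    ((n : ℤ) + 1) * ((n : ℤ) + 2) * (((BT.g (n + 1)).eval 0).coeff (k + 1)) =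
      2 * (((3 * (n + 1)).choose k : ℤ) * ((n + 2).choose (k + 2) : ℤ)) := by
  set G : PowerSeries (Polynomial (Polynomial ℤ)) := PowerSeries.mk BT.g with hG
  set E : PowerSeries (Polynomial (Polynomial ℤ)) := PowerSeries.mk BT.e with hE
  set K : PowerSeries (Polynomial ℤ) :=
    PowerSeries.mk (fun n => Polynomial.eval 0 (PowerSeries.coeff n (G - 1))) with hK
  have h1 : G - 1 = PowerSeries.X * (1 + PowerSeries.C Polynomial.X) * G * E := by
    have e1 : (1 + PowerSeries.C Polynomial.X : PowerSeries (Polynomial (Polynomial ℤ)))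
        = PowerSeries.C (1 + Polynomial.X) := by simp
    rw [mul_assoc, mul_assoc, e1]
    ext1 n
    rcases n with _ | n
    · rw [PowerSeries.coeff_zero_X_mul, map_sub, hG, PowerSeries.coeff_mk, BT.g_zero]
      simp
    · rw [PowerSeries.coeff_succ_X_mul, PowerSeries.coeff_C_mul, PowerSeries.coeff_mul, map_sub, hG,
        hE, PowerSeries.coeff_mk, BT.g_succ]
      simp [PowerSeries.coeff_one]
  have h2 : PowerSeries.C Polynomial.X * E =
      (PowerSeries.C (Polynomial.C Polynomial.X) * PowerSeries.C Polynomial.X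
        + PowerSeries.C Polynomial.X * (G - 1)
        + PowerSeries.C (Polynomial.C Polynomial.X) * (G - 1)
        - PowerSeries.C (Polynomial.C Polynomial.X) * PowerSeries.map Polynomial.C K) := by
    ext1 n
    rw [← map_mul]
    simp only [map_sub, map_add, PowerSeries.coeff_C_mul, PowerSeries.coeff_map, hK, hE, hG,
      PowerSeries.coeff_mk, PowerSeries.coeff_one, PowerSeries.coeff_C]
    rcases n with _ | n
    · simp [BT.e_zero, BT.g_zero]
    · simp [BT.e_succ]
  obtain ⟨U, hU, hk⟩ := quadratic_method (Polynomial.X : Polynomial ℤ) Polynomial.X_ne_zero (G - 1) K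
    (by rw [map_sub, hG, PowerSeries.coeff_mk, BT.g_zero]; simp)
    (by rw [← h2, add_sub_cancel]; linear_combination (PowerSeries.C Polynomial.X) * h1)
  have h3 := alg_final (Polynomial.X : Polynomial ℤ) U K hU hk n
  have h4 := congrArg (fun q => Polynomial.coeff q (k + 2)) h3
  have h5 : PowerSeries.coeff (n + 1) K = (BT.g (n + 1)).eval 0 := by
    simp [hK, hG, PowerSeries.coeff_one]
  have h6 : ((n : Polynomial ℤ) + 1) * ((n : Polynomial ℤ) + 2)
      = Polynomial.C (((n : ℤ) + 1) * ((n : ℤ) + 2)) := by simp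
  have h7 : (2 : Polynomial ℤ) = Polynomial.C 2 := by simp
  rw [h5, h6, h7] at h4
  simp only [Polynomial.coeff_C_mul] at h4
  rw [final_coeff, show k + 2 = (k + 1) + 1 by omega, Polynomial.coeff_X_mul] at h4
  exact h4

theorem count_tamari_intervals_by_canopy_agreement (n k : ℕ) (hn : 1 ≤ n) :
    n * (n + 1) *
        Set.ncard {p : BT × BT | BT.interval p n ∧ BT.agreeCount p = k + 2} =
      2 * Nat.choose (3 * n) k * Nat.choose (n + 1) (k + 2) := by
  obtain ⟨m, rfl⟩ : ∃ m, n = m + 1 := ⟨n - 1, by omega⟩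
  have h := tamari_count m k
  have h1 : (((BT.g (m + 1)).eval 0).coeff (k + 1)) =
      (Set.ncard {p : BT × BT | BT.interval p (m + 1) ∧ BT.agreeCount p = k + 2} : ℤ) := by
    have e1 : {p : BT × BT | BT.interval p (m + 1) ∧ BT.agreeCount p = k + 2}
        = ((BT.I (m + 1)).filter (fun p => BT.agt p = k + 1) : Finset (BT × BT)) := by
      ext p
      simp only [Set.mem_ofPred_eq, Finset.coe_filter, BT.mem_I]
      refine and_congr_right fun hp => ?_
      rw [BT.agreeCount_eq (hp.1.trans hp.2.1.symm)]
      omega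
    rw [e1, Set.ncard_coe_finset, BT.g, Polynomial.eval_finsetSum, Polynomial.finsetSum_coeff,
      Finset.card_filter]
    push_cast
    refine Finset.sum_congr rfl fun p _ => ?_
    simp [BT.wt, Polynomial.coeff_X_pow, eq_comm]
  rw [h1] at h
  have h2 : m + 1 + 1 = m + 2 := rfl
  rw [h2, mul_assoc 2]
  exact_mod_cast h
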